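/- arXiv:2102.02405 — 2 statements merged into one kernel-verified Lean document; each statement's English description precedes it below -/
import Mathlib

section
/- Let F_y = (e_l ⊂ e_1 ⊂ ⋯ ⊂ e_{l-1}), let B' = {g ∈ K : the matrix of g with respect to the ordered basis (e_1,…,e_l,e_{-l},…,e_{-1}) is upper triangular} (a Borel subgroup of K), let B_{2l-2} = {g ∈ SO(2l) : g e_l = e_l, g e_{-l} = e_{-l}, and the matrix of g with respect to that ordered basis is upper triangular}, and let E = (e_1 ⊂ ⋯ ⊂ e_{l-1}). Let W = {v ∈ ℂ^{2l} : β(v, e_l - e_{-l}) = 0} and let Y be the set of chains W_1 ⊂ ⋯ ⊂ W_{l-1} ⊂ W with dim W_i = i and β vanishing identically on W_{l-1} (the maximal isotropic flags of the (2l-1)-dimensional quadratic space W). Then for all k, k' ∈ K one has B'·(k·F_y) = B'·(k'·F_y) if and only if B_{2l-2}·(k^{-1}·E) = B_{2l-2}·(k'^{-1}·E); consequently the assignment B'·(k·F_y) ↦ B_{2l-2}·(k^{-1}·E) is a well-defined bijection from the set of B'-orbits on the K-orbit of F_y onto the set of B_{2l-2}-orbits on Y. -/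
open Module Submodule

noncomputable section

/-- `stdVec n m` is the `m`-th standard basis vector of `ℂ^n` (1-indexed); `0` out of range. -/
def stdVec (n m : ℕ) : Fin n → ℂ :=
  if h : 1 ≤ m ∧ m ≤ n then Pi.single (⟨m - 1, by omega⟩ : Fin n) 1 else 0

/-- `stdSub n k` is the subspace `U_k = span(e_1, …, e_k)` of `ℂ^n`. -/
def stdSub (n k : ℕ) : Submodule ℂ (Fin n → ℂ) :=
  span ℂ (stdVec n '' Set.Icc 1 k)

/-- The action of an invertible linear map of `ℂ^n` on a chain of subspaces. -/
def actFlag (n : ℕ) (g : (Fin n → ℂ) ≃ₗ[ℂ] (Fin n → ℂ))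
    (V : ℕ → Submodule ℂ (Fin n → ℂ)) (k : ℕ) : Submodule ℂ (Fin n → ℂ) :=
  Submodule.map g.toLinearMap (V k)

/-- The orbit of the chain `V` under a set `B` of invertible linear maps. -/
def orbitOf (n : ℕ) (B : Set ((Fin n → ℂ) ≃ₗ[ℂ] (Fin n → ℂ)))
    (V : ℕ → Submodule ℂ (Fin n → ℂ)) : Set (ℕ → Submodule ℂ (Fin n → ℂ)) :=
  {V' | ∃ b ∈ B, actFlag n b V = V'}

/-- The symmetric bilinear form `β(x,y) = ∑_{k=1}^n x_k y_{n+1-k}` on `ℂ^n`. -/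
def betaF (n : ℕ) (x y : Fin n → ℂ) : ℂ := ∑ k : Fin n, x k * y k.rev

/-- `SO(n,ℂ)` for the form `β`. -/
def SOgrp (n : ℕ) : Set ((Fin n → ℂ) ≃ₗ[ℂ] (Fin n → ℂ)) :=
  {g | LinearMap.det g.toLinearMap = 1 ∧ ∀ x y, betaF n (g x) (g y) = betaF n x y}

/-- A maximal isotropic flag `V 1 ⊂ ⋯ ⊂ V l` in `ℂ^n` (values pinned outside `1..l`
so that two flags are equal iff they agree in degrees `1, …, l`). -/
def IsIsoFlag (n l : ℕ) (V : ℕ → Submodule ℂ (Fin n → ℂ)) : Prop :=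
  (∀ i, i ≤ l → finrank ℂ ↥(V i) = i) ∧ (∀ i, V i ≤ V (i + 1)) ∧ (∀ i, l ≤ i → V i = V l) ∧
    (∀ u ∈ V l, ∀ w ∈ V l, betaF n u w = 0)

/-- The isotropic flag `(v 1 ⊂ ⋯ ⊂ v l)` spanned by `v 1, …, v l`. -/
def isoFlagOf (n l : ℕ) (v : ℕ → Fin n → ℂ) (k : ℕ) : Submodule ℂ (Fin n → ℂ) :=
  span ℂ (v '' Set.Icc 1 (min k l))

/-- `K = {g ∈ SO(2l) : g (e_l - e_{-l}) = e_l - e_{-l}}` (here `e_{-l} = e_{l+1}`),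
a copy of `SO(2l-1)`. -/
def Keven (l : ℕ) : Set ((Fin (2 * l) → ℂ) ≃ₗ[ℂ] (Fin (2 * l) → ℂ)) :=
  {g | g ∈ SOgrp (2 * l) ∧
       g (stdVec (2 * l) l - stdVec (2 * l) (l + 1)) =
         stdVec (2 * l) l - stdVec (2 * l) (l + 1)}

/-- `V'` lies in the `K`-orbit of `V`. -/
def InKEvenOrbit (l : ℕ) (V V' : ℕ → Submodule ℂ (Fin (2 * l) → ℂ)) : Prop :=
  ∃ g ∈ Keven l, actFlag (2 * l) g V = V'

/-- The maximal isotropic flag `F_y = (e_l ⊂ e_1 ⊂ e_2 ⊂ ⋯ ⊂ e_{l-1})` in `ℂ^{2l}`. -/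
def FyEvenVec (l m : ℕ) : Fin (2 * l) → ℂ :=
  if m = 1 then stdVec (2 * l) l else stdVec (2 * l) (m - 1)

def FyEvenFlag (l : ℕ) : ℕ → Submodule ℂ (Fin (2 * l) → ℂ) :=
  isoFlagOf (2 * l) l (FyEvenVec l)

/-- `B_{2l-2}`: elements of `SO(2l)` fixing `e_l` and `e_{-l}` whose matrix in the ordered
basis `(e_1, …, e_l, e_{-l}, …, e_{-1})` (the standard ordered basis) is upper triangular;
a Borel subgroup of the copy of `SO(2l-2)` inside `K`. -/
def BEvenSmall (l : ℕ) : Set ((Fin (2 * l) → ℂ) ≃ₗ[ℂ] (Fin (2 * l) → ℂ)) :=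
  {g | g ∈ SOgrp (2 * l) ∧
       g (stdVec (2 * l) l) = stdVec (2 * l) l ∧
       g (stdVec (2 * l) (l + 1)) = stdVec (2 * l) (l + 1) ∧
       ∀ m, 1 ≤ m → m ≤ 2 * l → g (stdVec (2 * l) m) ∈ stdSub (2 * l) m}

/-- `B'`: the Borel subgroup of `K` of elements upper triangular with respect to the
ordered basis `(e_1, …, e_l, e_{-l}, …, e_{-1})` (the standard ordered basis). -/
def BEvenBorel (l : ℕ) : Set ((Fin (2 * l) → ℂ) ≃ₗ[ℂ] (Fin (2 * l) → ℂ)) :=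
  {g | g ∈ Keven l ∧ ∀ m, 1 ≤ m → m ≤ 2 * l →
    g (stdVec (2 * l) m) ∈ stdSub (2 * l) m}

/-- The flag `E = (e_1 ⊂ ⋯ ⊂ e_{l-1})`. -/
def EEvenFlag (l : ℕ) : ℕ → Submodule ℂ (Fin (2 * l) → ℂ) :=
  isoFlagOf (2 * l) (l - 1) (stdVec (2 * l))

/-- Membership in `Y`: chains `W_1 ⊂ ⋯ ⊂ W_{l-1} ⊂ W = (e_l - e_{-l})^⊥` with
`dim W_i = i` and `β` vanishing identically on `W_{l-1}` (the maximal isotropic flags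
of the `(2l-1)`-dimensional quadratic space `W`). -/
def InY (l : ℕ) (V : ℕ → Submodule ℂ (Fin (2 * l) → ℂ)) : Prop :=
  IsIsoFlag (2 * l) (l - 1) V ∧
    ∀ v ∈ V (l - 1), betaF (2 * l) v (stdVec (2 * l) l - stdVec (2 * l) (l + 1)) = 0

/-!
If a group `K` acts on two sets with points `x` and `y`, then `k • x ↦ k⁻¹ • y` matches the orbits
of the stabiliser of `y` on `K • x` with the orbits of the stabiliser of `x` on `K • y`. For
`x = F_y` and `y = E` these stabilisers are `B'` and `B_{2l-2}`: an element of `K` that stabilises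
the isotropic part of the standard flag stabilises all of it, because the two ways of extending
`U_{l-1}` to a maximal isotropic subspace are distinguished by the determinant.

It remains to see that `K • E = Y`. Isotropic flags in the orthogonal complement of
`f = e_l - e_{-l}` are moved onto each other, one dimension at a time, by products of at most two
reflections fixing `f`. The determinant can then be corrected by minus the reflection in `f`: it
fixes `f`, preserves every subspace of the complement, and has determinant `-1` since the ambient
dimension is even.
-/

open scoped Pointwise

section Orbits

variable {G α β : Type*} [Group G] [MulAction G α] [MulAction G β]

theorem orbit_inf_stabilizer_smul_eq_iff (H : Subgroup G) (x : α) (y : β) {a a' : G}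
    (ha : a ∈ H) (ha' : a' ∈ H) :
    MulAction.orbit ↥(H ⊓ MulAction.stabilizer G y) (a • x) =
        MulAction.orbit ↥(H ⊓ MulAction.stabilizer G y) (a' • x) ↔
      MulAction.orbit ↥(H ⊓ MulAction.stabilizer G x) (a⁻¹ • y) =
        MulAction.orbit ↥(H ⊓ MulAction.stabilizer G x) (a'⁻¹ • y) := by
  simp only [MulAction.orbit_eq_iff, MulAction.mem_orbit_iff, Subtype.exists, Subgroup.mk_smul,
    Subgroup.mem_inf, MulAction.mem_stabilizer_iff, exists_prop]
  -- Both sides say that `a * c = b * a'` for some `b ∈ H` fixing `y` and some `c ∈ H` fixing `x`.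
  constructor
  · rintro ⟨b, ⟨hb, hby⟩, hbx⟩
    refine ⟨a⁻¹ * b * a', ⟨H.mul_mem (H.mul_mem (H.inv_mem ha) hb) ha', ?_⟩, ?_⟩
    · rw [mul_smul, mul_smul, hbx, inv_smul_smul]
    · rw [mul_smul, smul_inv_smul, mul_smul, hby]
  · rintro ⟨c, ⟨hc, hcx⟩, hcy⟩
    refine ⟨a * c * a'⁻¹, ⟨H.mul_mem (H.mul_mem ha hc) (H.inv_mem ha'), ?_⟩, ?_⟩
    · rw [mul_smul, mul_smul, hcy, smul_inv_smul]
    · rw [mul_smul, inv_smul_smul, mul_smul, hcx]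

end Orbits

section Isometries

variable {𝕜 V : Type*} [Field 𝕜] [AddCommGroup V] [Module 𝕜 V]

/-- The isometry group `O(V, B)` of a bilinear form, as a subgroup of `GL(V)`. -/
def isometryGroup (B : LinearMap.BilinForm 𝕜 V) : Subgroup (V ≃ₗ[𝕜] V) where
  carrier := {g | B.IsOrthogonal g}
  one_mem' _ _ := rfl
  mul_mem' hg hh x y := (hg _ _).trans (hh x y)
  inv_mem' {g} hg x y := by
    rw [← hg]
    exact congrArg₂ (fun v w => B v w) (g.apply_symm_apply x) (g.apply_symm_apply y)

variable {B : LinearMap.BilinForm 𝕜 V} {g : V ≃ₗ[𝕜] V}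

theorem apply_apply_of_mem_isometryGroup (hg : g ∈ isometryGroup B) (x y : V) :
    B (g x) (g y) = B x y :=
  hg x y

theorem smul_orthogonal_of_mem_isometryGroup (hg : g ∈ isometryGroup B) (U : Submodule 𝕜 V) :
    g • B.orthogonal U = B.orthogonal (g • U) := by
  ext x
  obtain ⟨z, rfl⟩ := g.surjective x
  rw [← LinearEquiv.smul_def g z]
  simp only [LinearMap.BilinForm.mem_orthogonal_iff, mem_smul_pointwise_iff_exists,
    LinearEquiv.smul_def, EmbeddingLike.apply_eq_iff_eq,
    exists_eq_right, forall_exists_index, and_imp, forall_apply_eq_imp_iff₂,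
    apply_apply_of_mem_isometryGroup hg]

theorem smul_submodule_eq_self_of_forall_mem [FiniteDimensional 𝕜 V] {U : Submodule 𝕜 V}
    (h : ∀ x ∈ U, g x ∈ U) : g • U = U :=
  Submodule.eq_of_le_of_finrank_eq (Submodule.map_le_iff_le_comap.2 h)
    (LinearEquiv.finrank_map_eq g U)

theorem smul_submodule_eq_self_of_forall_mem_eq {U : Submodule 𝕜 V} (h : ∀ x ∈ U, g x = x) :
    g • U = U :=
  (map_le_iff_le_comap.2 fun x hx => mem_comap.2 ((h x hx).symm ▸ hx)).antisymm
    fun x hx => ⟨x, hx, h x hx⟩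

theorem det_eq_one_or_neg_one_of_mem_isometryGroup [FiniteDimensional 𝕜 V]
    (hB : B.Nondegenerate) (hg : g ∈ isometryGroup B) :
    LinearMap.det g.toLinearMap = 1 ∨ LinearMap.det g.toLinearMap = -1 := by
  let b := Module.finBasis 𝕜 V
  have hcomp : B.comp g.toLinearMap g.toLinearMap = B := LinearMap.ext₂ hg
  have hgram := congrArg (fun C => (LinearMap.BilinForm.toMatrix b C).det) hcomp
  simp only [LinearMap.BilinForm.toMatrix_comp b b, Matrix.det_mul, Matrix.det_transpose,
    LinearMap.det_toMatrix] at hgram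
  have hdet : (LinearMap.BilinForm.toMatrix b B).det ≠ 0 :=
    (LinearMap.BilinForm.nondegenerate_iff_det_ne_zero b).1 hB
  refine mul_self_eq_one_iff.1 (mul_right_cancel₀ hdet ?_)
  linear_combination hgram

/-- The reflection `x ↦ x - 2 (B v x / B v v) v` along an anisotropic vector `v`. -/
def orthoReflection (B : LinearMap.BilinForm 𝕜 V) {v : V} (hv : B v v ≠ 0) : V ≃ₗ[𝕜] V :=
  Module.reflection (x := v) (f := (2 / B v v) • B v) (by simp [hv])

variable {v : V} (hv : B v v ≠ 0)

theorem orthoReflection_apply (x : V) :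
    orthoReflection B hv x = x - (2 * B v x / B v v) • v := by
  rw [orthoReflection, Module.reflection_apply, LinearMap.smul_apply, smul_eq_mul,
    div_mul_eq_mul_div]

theorem orthoReflection_apply_self : orthoReflection B hv v = -v :=
  Module.reflection_apply_self _

theorem orthoReflection_apply_of_eq_zero {x : V} (hx : B v x = 0) :
    orthoReflection B hv x = x := by
  simp [orthoReflection_apply, hx]

theorem orthoReflection_mem_isometryGroup (hs : B.IsSymm) :
    orthoReflection B hv ∈ isometryGroup B := by
  intro x y
  simp only [orthoReflection_apply, map_sub, map_smul, LinearMap.sub_apply,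
    LinearMap.smul_apply, smul_eq_mul, hs.eq x v]
  field_simp
  ring

theorem det_orthoReflection [FiniteDimensional 𝕜 V] :
    LinearMap.det (orthoReflection B hv).toLinearMap = -1 := by
  have htransvection : (orthoReflection B hv).toLinearMap =
      LinearMap.transvection (-(2 / B v v) • B v) v := by
    ext x
    simp [orthoReflection_apply, LinearMap.transvection.apply, sub_eq_add_neg, mul_comm_div,
      mul_div_assoc]
  rw [htransvection, LinearMap.transvection.det, LinearMap.smul_apply, smul_eq_mul, neg_mul,
    div_mul_cancel₀ _ hv]
  ring

theorem orthoReflection_sub_apply_left (hs : B.IsSymm) {u u' : V} (huu' : B u u = B u' u')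
    (h : B (u - u') (u - u') ≠ 0) : orthoReflection B h u = u' := by
  have hnorm : B (u - u') (u - u') = 2 * B (u - u') u := by
    simp only [map_sub, LinearMap.sub_apply, hs.eq u u', ← huu']
    ring
  rw [orthoReflection_apply, ← hnorm, div_self h, one_smul, sub_sub_cancel]

end Isometries

section Witt

variable {𝕜 V : Type*} [Field 𝕜] [AddCommGroup V] [Module 𝕜 V]
  {B : LinearMap.BilinForm 𝕜 V} {U : Submodule 𝕜 V} {u u' : V}

theorem exists_isometry_apply_eq_of_apply_ne_zero [NeZero (2 : 𝕜)] (hs : B.IsSymm)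
    (huU : u ∈ B.orthogonal U) (huU' : u' ∈ B.orthogonal U) (hu : B u u = 0) (hu' : B u' u' = 0)
    (huu' : B u u' ≠ 0) : ∃ g ∈ isometryGroup B, (∀ x ∈ U, g x = x) ∧ g u = u' := by
  have hnorm : B (u - u') (u - u') ≠ 0 := by
    have heq : B (u - u') (u - u') = -2 * B u u' := by
      simp only [map_sub, LinearMap.sub_apply, hu, hu', ← hs.eq u u']
      ring
    rw [heq]
    exact mul_ne_zero (neg_ne_zero.2 two_ne_zero) huu'
  refine ⟨orthoReflection B hnorm, orthoReflection_mem_isometryGroup hnorm hs, fun x hx => ?_,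
    orthoReflection_sub_apply_left hs (hu.trans hu'.symm) hnorm⟩
  exact orthoReflection_apply_of_eq_zero hnorm
    ((hs.eq (u - u') x).trans (sub_mem huU huU' x hx))

variable [FiniteDimensional 𝕜 V]

theorem exists_mem_orthogonal_apply_ne_zero (hB : B.Nondegenerate) (hs : B.IsSymm)
    (hu : u ∉ U) : ∃ y ∈ B.orthogonal U, B y u ≠ 0 := by
  rw [← LinearMap.BilinForm.orthogonal_orthogonal hB hs.isRefl U,
    LinearMap.BilinForm.mem_orthogonal_iff] at hu
  push Not at hu
  exact hu

theorem exists_mem_orthogonal_apply_ne_zero_and (hB : B.Nondegenerate) (hs : B.IsSymm)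
    (hu : u ∉ U) (hu' : u' ∉ U) : ∃ y ∈ B.orthogonal U, B y u ≠ 0 ∧ B y u' ≠ 0 := by
  obtain ⟨y, hy, hyu⟩ := exists_mem_orthogonal_apply_ne_zero hB hs hu
  obtain ⟨z, hz, hzu'⟩ := exists_mem_orthogonal_apply_ne_zero hB hs hu'
  by_cases hyu' : B y u' = 0
  · by_cases hzu : B z u = 0
    · exact ⟨y + z, add_mem hy hz, by simpa [hzu], by simpa [hyu']⟩
    · exact ⟨z, hz, hzu, hzu'⟩
  · exact ⟨y, hy, hyu, hyu'⟩

theorem exists_anisotropic_mem_orthogonal [NeZero (2 : 𝕜)] (hB : B.Nondegenerate) (hs : B.IsSymm)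
    (hu : u ∉ U) (hu' : u' ∉ U) (huU : u ∈ B.orthogonal U) (huu : B u u = 0) (huu' : B u u' = 0) :
    ∃ y ∈ B.orthogonal U, B y y ≠ 0 ∧ B y u ≠ 0 ∧ B y u' ≠ 0 := by
  obtain ⟨y, hy, hyu, hyu'⟩ := exists_mem_orthogonal_apply_ne_zero_and hB hs hu hu'
  by_cases hyy : B y y = 0
  · have hnorm : B (y + u) (y + u) = 2 * B y u := by
      simp only [map_add, LinearMap.add_apply, hyy, huu, hs.eq u y]
      ring
    refine ⟨y + u, add_mem hy huU, ?_, by simpa [huu], by simpa [huu']⟩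
    rwa [hnorm, mul_ne_zero_iff_left two_ne_zero]
  · exact ⟨y, hy, hyy, hyu, hyu'⟩

theorem exists_isometry_apply_eq_of_isotropic [NeZero (2 : 𝕜)] (hB : B.Nondegenerate)
    (hs : B.IsSymm) (huU : u ∈ B.orthogonal U) (huU' : u' ∈ B.orthogonal U) (hu : B u u = 0)
    (hu' : B u' u' = 0) (hnu : u ∉ U) (hnu' : u' ∉ U) :
    ∃ g ∈ isometryGroup B, (∀ x ∈ U, g x = x) ∧ g u = u' := by
  by_cases huu' : B u u' = 0
  · obtain ⟨y, hy, hyy, hyu, hyu'⟩ :=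
      exists_anisotropic_mem_orthogonal hB hs hnu hnu' huU hu huu'
    set s := orthoReflection B hyy
    have hs_mem : s ∈ isometryGroup B := orthoReflection_mem_isometryGroup hyy hs
    have hs_fix : ∀ x ∈ U, s x = x := fun x hx =>
      orthoReflection_apply_of_eq_zero hyy ((hs.eq y x).trans (hy x hx))
    have hsu : s u ∈ B.orthogonal U := by
      rw [orthoReflection_apply]
      exact sub_mem huU (smul_mem _ _ hy)
    have hsuu' : B (s u) u' ≠ 0 := by
      simp [s, orthoReflection_apply, huu', hyy, hyu, hyu', two_ne_zero]
    obtain ⟨g, hg, hgU, hgu⟩ := exists_isometry_apply_eq_of_apply_ne_zero hs hsu huU'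
      ((apply_apply_of_mem_isometryGroup hs_mem u u).trans hu) hu' hsuu'
    exact ⟨g * s, mul_mem hg hs_mem, fun x hx => (congrArg g (hs_fix x hx)).trans (hgU x hx), hgu⟩
  · exact exists_isometry_apply_eq_of_apply_ne_zero hs huU huU' hu hu' huu'

end Witt

section Flags

variable {𝕜 V : Type*} [Field 𝕜] [AddCommGroup V] [Module 𝕜 V] {B : LinearMap.BilinForm 𝕜 V}

/-- `F 0 ⊂ ⋯ ⊂ F r` is a flag of totally isotropic subspaces of dimensions `0, …, r` orthogonal
to `S`. Only the values `F i` with `i ≤ r` matter. -/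
structure IsIsotropicFlag (B : LinearMap.BilinForm 𝕜 V) (S : Submodule 𝕜 V) (r : ℕ)
    (F : ℕ → Submodule 𝕜 V) : Prop where
  finrank_eq : ∀ i ≤ r, finrank 𝕜 (F i) = i
  le_succ : ∀ i < r, F i ≤ F (i + 1)
  isotropic : F r ≤ B.orthogonal (F r)
  le_orthogonal : F r ≤ B.orthogonal S

namespace IsIsotropicFlag

variable {S : Submodule 𝕜 V} {r : ℕ} {F F' : ℕ → Submodule 𝕜 V}

theorem le_of_le (hF : IsIsotropicFlag B S r F) {i : ℕ} (hi : i ≤ r) : F i ≤ F r := by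
  induction hi using Nat.decreasingInduction with
  | of_succ i hi ih => exact (hF.le_succ i hi).trans ih
  | self => exact le_rfl

theorem of_succ (hF : IsIsotropicFlag B S (r + 1) F) : IsIsotropicFlag B S r F where
  finrank_eq i hi := hF.finrank_eq i (by omega)
  le_succ i hi := hF.le_succ i (by omega)
  isotropic :=
    have hle := hF.le_succ r (Nat.lt_succ_self r)
    (hle.trans hF.isotropic).trans (LinearMap.BilinForm.orthogonal_le hle)
  le_orthogonal := (hF.le_succ r (Nat.lt_succ_self r)).trans hF.le_orthogonal

theorem smul (hF : IsIsotropicFlag B S r F) {g : V ≃ₗ[𝕜] V} (hg : g ∈ isometryGroup B)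
    (hS : g • S = S) : IsIsotropicFlag B S r fun i => g • F i where
  finrank_eq i hi := (LinearEquiv.finrank_map_eq g (F i)).trans (hF.finrank_eq i hi)
  le_succ i hi := smul_mono_right g (hF.le_succ i hi)
  isotropic := by
    rw [← smul_orthogonal_of_mem_isometryGroup hg]
    exact smul_mono_right g hF.isotropic
  le_orthogonal := by
    rw [← hS, ← smul_orthogonal_of_mem_isometryGroup hg]
    exact smul_mono_right g hF.le_orthogonal

theorem le_orthogonal_sup (hF : IsIsotropicFlag B S (r + 1) F) :
    F (r + 1) ≤ B.orthogonal (S ⊔ F r) := by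
  intro u hu x hx
  obtain ⟨s, hs, w, hw, rfl⟩ := mem_sup.1 hx
  have hsu : B s u = 0 := hF.le_orthogonal hu s hs
  have hwu : B w u = 0 := hF.isotropic hu w (hF.le_of_le (Nat.le_succ r) hw)
  simp [hsu, hwu]

theorem notMem_sup (hF : IsIsotropicFlag B S (r + 1) F) (hS : Disjoint S (B.orthogonal S))
    {u : V} (hu : u ∈ F (r + 1)) (hur : u ∉ F r) : u ∉ S ⊔ F r := by
  intro h
  obtain ⟨s, hs, w, hw, rfl⟩ := mem_sup.1 h
  have hs_orth : s ∈ B.orthogonal S := by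
    have hdiff := sub_mem hu (hF.le_of_le (Nat.le_succ r) hw)
    rw [add_sub_cancel_right] at hdiff
    exact hF.le_orthogonal hdiff
  rw [disjoint_def.1 hS s hs hs_orth, zero_add] at hur
  exact hur hw

theorem exists_mem_notMem (hF : IsIsotropicFlag B S (r + 1) F) : ∃ u ∈ F (r + 1), u ∉ F r := by
  by_contra! h
  have hle : F (r + 1) ≤ F r := h
  have heq := congrArg (fun U : Submodule 𝕜 V => finrank 𝕜 U)
    (hle.antisymm (hF.le_succ r (Nat.lt_succ_self r)))
  rw [hF.finrank_eq _ le_rfl, hF.finrank_eq _ (Nat.le_succ r)] at heq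
  omega

theorem sup_span_singleton_eq [FiniteDimensional 𝕜 V] (hF : IsIsotropicFlag B S (r + 1) F)
    {u : V} (hu : u ∈ F (r + 1)) (hur : u ∉ F r) : F r ⊔ span 𝕜 {u} = F (r + 1) := by
  refine Submodule.eq_of_le_of_finrank_eq
    (sup_le (hF.le_succ r (Nat.lt_succ_self r)) ((span_singleton_le_iff_mem _ _).2 hu)) ?_
  rw [finrank_sup_span_singleton hur, hF.finrank_eq _ le_rfl, hF.finrank_eq _ (Nat.le_succ r)]

variable [FiniteDimensional 𝕜 V] [NeZero (2 : 𝕜)]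

theorem exists_isometry_smul_succ_eq (hB : B.Nondegenerate) (hs : B.IsSymm)
    (hS : Disjoint S (B.orthogonal S)) (hF : IsIsotropicFlag B S (r + 1) F)
    (hF' : IsIsotropicFlag B S (r + 1) F') (hFF' : F r = F' r) :
    ∃ g ∈ isometryGroup B, (∀ x ∈ S ⊔ F r, g x = x) ∧ g • F (r + 1) = F' (r + 1) := by
  obtain ⟨u, hu, hur⟩ := hF.exists_mem_notMem
  obtain ⟨u', hu', hur'⟩ := hF'.exists_mem_notMem
  have hnu' := hF'.notMem_sup hS hu' hur'
  have horth' := hF'.le_orthogonal_sup hu'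
  rw [← hFF'] at hnu' horth'
  obtain ⟨g, hg, hgU, hgu⟩ := exists_isometry_apply_eq_of_isotropic hB hs
    (hF.le_orthogonal_sup hu) horth' (hF.isotropic hu u hu) (hF'.isotropic hu' u' hu')
    (hF.notMem_sup hS hu hur) hnu'
  have hgF : g • F r = F r :=
    smul_submodule_eq_self_of_forall_mem_eq fun x hx => hgU x (mem_sup_right hx)
  refine ⟨g, hg, hgU, ?_⟩
  rw [← hF.sup_span_singleton_eq hu hur, ← hF'.sup_span_singleton_eq hu' hur', smul_sup',
    hgF, hFF', smul_span, Set.smul_set_singleton, LinearEquiv.smul_def, hgu]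

theorem exists_isometry_smul_eq (hB : B.Nondegenerate) (hs : B.IsSymm)
    (hS : Disjoint S (B.orthogonal S)) (hF : IsIsotropicFlag B S r F)
    (hF' : IsIsotropicFlag B S r F') :
    ∃ g ∈ isometryGroup B, (∀ x ∈ S, g x = x) ∧ ∀ i ≤ r, g • F i = F' i := by
  induction r with
  | zero =>
    refine ⟨1, one_mem _, fun x _ => rfl, fun i hi => ?_⟩
    rw [one_smul, finrank_eq_zero.1 ((hF.finrank_eq i hi).trans (by omega)),
      finrank_eq_zero.1 ((hF'.finrank_eq i hi).trans (by omega))]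
  | succ r ih =>
    obtain ⟨g, hg, hgS, hgF⟩ := ih hF.of_succ hF'.of_succ
    obtain ⟨h, hh, hhU, hhF⟩ := exists_isometry_smul_succ_eq hB hs hS
      (hF.smul hg (smul_submodule_eq_self_of_forall_mem_eq hgS)) hF' (hgF r le_rfl)
    refine ⟨h * g, mul_mem hh hg, fun x hx => ?_, fun i hi => ?_⟩
    · exact (congrArg h (hgS x hx)).trans (hhU x (mem_sup_left hx))
    · rw [mul_smul]
      obtain hi | rfl := Nat.lt_or_eq_of_le hi
      · rw [hgF i (by omega)]
        refine smul_submodule_eq_self_of_forall_mem_eq fun x hx => hhU x (mem_sup_right ?_)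
        rw [hgF r le_rfl]
        exact hF'.of_succ.le_of_le (by omega) hx
      · exact hhF

end IsIsotropicFlag

/-- The stabiliser of the vector `f` in the special orthogonal group `SO(V, B)`. -/
def specialStabilizer (B : LinearMap.BilinForm 𝕜 V) (f : V) : Subgroup (V ≃ₗ[𝕜] V) :=
  isometryGroup B ⊓ LinearEquiv.det.ker ⊓ MulAction.stabilizer (V ≃ₗ[𝕜] V) f

variable {f : V} {r : ℕ} {F F' : ℕ → Submodule 𝕜 V}

theorem mem_specialStabilizer_iff {g : V ≃ₗ[𝕜] V} : g ∈ specialStabilizer B f ↔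
    (g ∈ isometryGroup B ∧ LinearMap.det g.toLinearMap = 1) ∧ g f = f := by
  rw [specialStabilizer, Subgroup.mem_inf, Subgroup.mem_inf, MonoidHom.mem_ker, ← Units.val_inj,
    LinearEquiv.coe_det, Units.val_one, MulAction.mem_stabilizer_iff, LinearEquiv.smul_def]

variable [FiniteDimensional 𝕜 V]

theorem exists_isometry_det_eq_neg_one_smul_eq (hs : B.IsSymm) (hf : B f f ≠ 0)
    (hn : Even (finrank 𝕜 V)) : ∃ g ∈ isometryGroup B, LinearMap.det g.toLinearMap = -1 ∧ g f = f ∧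
      ∀ U ≤ B.orthogonal (span 𝕜 {f}), g • U = U := by
  refine ⟨LinearEquiv.neg 𝕜 * orthoReflection B hf, mul_mem (fun x y => ?_)
    (orthoReflection_mem_isometryGroup hf hs), ?_, ?_, fun U hU => ?_⟩
  · simp
  · have hneg : (LinearEquiv.neg 𝕜 : V ≃ₗ[𝕜] V).toLinearMap = (-1 : 𝕜) • LinearMap.id := by
      ext x
      simp
    refine (LinearMap.det_comp _ _).trans ?_
    rw [hneg, LinearMap.det_smul, LinearMap.det_id, det_orthoReflection, hn.neg_one_pow,
      mul_one, one_mul]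
  · simp [orthoReflection_apply_self]
  · refine smul_submodule_eq_self_of_forall_mem fun x hx => ?_
    have hfx : B f x = 0 := hU hx f (mem_span_singleton_self f)
    simpa [orthoReflection_apply_of_eq_zero hf hfx] using hx

theorem exists_mem_specialStabilizer_smul_flag_eq [NeZero (2 : 𝕜)] (hB : B.Nondegenerate)
    (hs : B.IsSymm) (hf : B f f ≠ 0) (hn : Even (finrank 𝕜 V))
    (hF : IsIsotropicFlag B (span 𝕜 {f}) r F) (hF' : IsIsotropicFlag B (span 𝕜 {f}) r F') :
    ∃ g ∈ specialStabilizer B f, ∀ i ≤ r, g • F i = F' i := by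
  have hdisj : Disjoint (span 𝕜 {f}) (B.orthogonal (span 𝕜 {f})) :=
    (LinearMap.BilinForm.isCompl_span_singleton_orthogonal hf).disjoint
  obtain ⟨g, hg, hgf, hgF⟩ := hF.exists_isometry_smul_eq hB hs hdisj hF'
  replace hgf := hgf f (mem_span_singleton_self f)
  obtain hdet | hdet := det_eq_one_or_neg_one_of_mem_isometryGroup hB hg
  · exact ⟨g, mem_specialStabilizer_iff.2 ⟨⟨hg, hdet⟩, hgf⟩, hgF⟩
  · obtain ⟨h, hh, hdeth, hhf, hhU⟩ := exists_isometry_det_eq_neg_one_smul_eq hs hf hn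
    refine ⟨g * h, mem_specialStabilizer_iff.2 ⟨⟨mul_mem hg hh, ?_⟩, ?_⟩, fun i hi => ?_⟩
    · exact (LinearMap.det_comp _ _).trans (by rw [hdet, hdeth, neg_one_mul, neg_neg])
    · exact (congrArg g hhf).trans hgf
    · rw [mul_smul, hhU _ ((hF.le_of_le hi).trans hF.le_orthogonal), hgF i hi]

end Flags

section StandardFlag

variable {n m m' : ℕ}

theorem stdVec_apply (n m : ℕ) (k : Fin n) : stdVec n m k = if k.val + 1 = m then 1 else 0 := by
  rw [stdVec]
  split_ifs with hm hk hk
  · rw [show (⟨m - 1, by omega⟩ : Fin n) = k from Fin.ext (Nat.eq_sub_of_add_eq hk).symm,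
      Pi.single_eq_same]
  · exact Pi.single_eq_of_ne (fun h => hk (by simp [h, hm.1])) 1
  · omega
  · rfl

theorem stdVec_val_add_one (k : Fin n) : stdVec n (k.val + 1) = Pi.single k 1 := by
  ext j
  simp [stdVec_apply, Pi.single_apply, Fin.ext_iff]

theorem stdVec_mem_stdSub (hm : 1 ≤ m) (hmm' : m ≤ m') : stdVec n m ∈ stdSub n m' :=
  subset_span ⟨m, ⟨hm, hmm'⟩, rfl⟩

theorem stdSub_mono (n : ℕ) : Monotone (stdSub n) := fun _ _ h =>
  span_mono (Set.image_mono (Set.Icc_subset_Icc_right h))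

theorem mem_stdSub_iff {x : Fin n → ℂ} : x ∈ stdSub n m ↔ ∀ k : Fin n, m ≤ k.val → x k = 0 := by
  constructor
  · intro hx k hk
    have hle : stdSub n m ≤ LinearMap.ker (LinearMap.proj k : (Fin n → ℂ) →ₗ[ℂ] ℂ) := by
      rw [stdSub, span_le, Set.image_subset_iff]
      intro j hj
      have hkj : k.val + 1 ≠ j := ((Nat.lt_succ_of_le hk).trans_le' hj.2).ne'
      simp [stdVec_apply, hkj]
    exact hle hx
  · intro h
    rw [pi_eq_sum_univ x]
    refine sum_mem fun k _ => ?_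
    by_cases hk : m ≤ k.val
    · simp [h k hk]
    · convert smul_mem _ (x k) (stdVec_mem_stdSub (n := n) (Nat.le_add_left 1 k)
        (Nat.succ_le_of_lt (not_le.1 hk))) using 2
      ext j
      simp [stdVec_apply, Fin.ext_iff, eq_comm]

theorem stdSub_eq_top (hnm : n ≤ m) : stdSub n m = ⊤ :=
  eq_top_iff.2 fun _ _ => mem_stdSub_iff.2 fun k hk => (k.isLt.not_ge (hnm.trans hk)).elim

theorem stdSub_succ (n m : ℕ) :
    stdSub n (m + 1) = stdSub n m ⊔ span ℂ {stdVec n (m + 1)} := by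
  rw [stdSub, stdSub, ← Order.succ_eq_add_one, ← Set.insert_Icc_right_eq_Icc_succ (by simp),
    Set.image_insert_eq, span_insert, sup_comm]

theorem finrank_stdSub (hm : m ≤ n) : finrank ℂ (stdSub n m) = m := by
  induction m with
  | zero => rw [stdSub, Set.Icc_eq_empty (by simp), Set.image_empty, span_empty, finrank_bot]
  | succ m ih =>
    have hnotMem : stdVec n (m + 1) ∉ stdSub n m := fun h => by
      simpa [stdVec_apply] using mem_stdSub_iff.1 h ⟨m, hm⟩ le_rfl
    rw [stdSub_succ, finrank_sup_span_singleton hnotMem, ih (Nat.le_of_succ_le hm)]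

theorem smul_stdSub_eq_iff {g : (Fin n → ℂ) ≃ₗ[ℂ] (Fin n → ℂ)} :
    g • stdSub n = stdSub n ↔ ∀ m, 1 ≤ m → m ≤ n → g (stdVec n m) ∈ stdSub n m := by
  refine ⟨fun h m hm _ => ?_, fun h => funext fun m => ?_⟩
  · rw [← h]
    exact smul_mem_pointwise_smul _ _ _ (stdVec_mem_stdSub hm le_rfl)
  · have hle : stdSub n m ≤ (stdSub n m).comap g.toLinearMap := by
      rw [stdSub, span_le, Set.image_subset_iff, ← stdSub]
      intro j hj
      by_cases hjn : j ≤ n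
      · exact stdSub_mono n hj.2 (h j hj.1 hjn)
      · simp [stdVec, hjn]
    exact smul_submodule_eq_self_of_forall_mem hle

/-- The form `β` of `betaF` as a bilinear form. -/
def betaForm (n : ℕ) : LinearMap.BilinForm ℂ (Fin n → ℂ) :=
  LinearMap.mk₂ ℂ (betaF n)
    (by intro x y z; simp [betaF, add_mul, Finset.sum_add_distrib])
    (by intro c x y; simp [betaF, Finset.mul_sum, mul_assoc])
    (by intro x y z; simp [betaF, mul_add, Finset.sum_add_distrib])
    (by intro c x y; simp [betaF, Finset.mul_sum, mul_left_comm])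

theorem betaForm_apply (x y : Fin n → ℂ) : betaForm n x y = ∑ k, x k * y k.rev :=
  rfl

theorem betaForm_isSymm (n : ℕ) : (betaForm n).IsSymm where
  eq x y := by
    rw [betaForm_apply, betaForm_apply, ← Equiv.sum_comp Fin.revPerm]
    simp [mul_comm]

theorem betaForm_stdVec_right (x : Fin n → ℂ) (k : Fin n) :
    betaForm n x (stdVec n (k.rev.val + 1)) = x k := by
  rw [betaForm_apply, stdVec_val_add_one]
  simp [Pi.single_apply]

theorem betaForm_stdVec_stdVec (hm : 1 ≤ m) (hmn : m ≤ n) (m' : ℕ) :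
    betaForm n (stdVec n m) (stdVec n m') = if m + m' = n + 1 then 1 else 0 := by
  obtain ⟨m, rfl⟩ := Nat.exists_eq_add_of_le' hm
  have hrev : m + 1 = (Fin.rev (Fin.rev ⟨m, hmn⟩)).val + 1 := by rw [Fin.rev_rev]
  rw [← (betaForm_isSymm n).eq, hrev, betaForm_stdVec_right, stdVec_apply, Fin.rev_rev,
    Fin.val_rev]
  exact if_congr (by omega) rfl rfl

theorem betaForm_nondegenerate (n : ℕ) : (betaForm n).Nondegenerate := by
  refine (betaForm_isSymm n).isRefl.nondegenerate_iff_separatingLeft.2 fun x hx => ?_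
  ext k
  rw [← betaForm_stdVec_right x, hx, Pi.zero_apply]

theorem orthogonal_stdSub (n m : ℕ) :
    (betaForm n).orthogonal (stdSub n m) = stdSub n (n - m) := by
  ext x
  refine ⟨fun hx => mem_stdSub_iff.2 fun k hk => ?_, fun hx y hy => ?_⟩
  · have hmem : stdVec n (k.rev.val + 1) ∈ stdSub n m :=
      stdVec_mem_stdSub (Nat.le_add_left 1 _) (by rw [Fin.val_rev]; omega)
    rw [← betaForm_stdVec_right x, ← (betaForm_isSymm n).eq]
    exact hx _ hmem
  · refine (betaForm_apply y x).trans (Finset.sum_eq_zero fun k _ => ?_)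
    rw [mem_stdSub_iff] at hx hy
    by_cases hk : m ≤ k.val
    · rw [hy k hk, zero_mul]
    · rw [hx k.rev (by rw [Fin.val_rev]; omega), mul_zero]

theorem stdSub_le_orthogonal (h : 2 * m ≤ n) :
    stdSub n m ≤ (betaForm n).orthogonal (stdSub n m) := by
  rw [orthogonal_stdSub]
  exact stdSub_mono n (by omega)

theorem apply_self_mul_apply_rev_eq_one {g : (Fin n → ℂ) ≃ₗ[ℂ] (Fin n → ℂ)}
    (hg : g ∈ isometryGroup (betaForm n)) (hstd : g • stdSub n = stdSub n) (k : Fin n) :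
    g (stdVec n (k.val + 1)) k * g (stdVec n (k.rev.val + 1)) k.rev = 1 := by
  have hcoord {i j : Fin n} (hij : i < j) : g (stdVec n (i.val + 1)) j = 0 :=
    mem_stdSub_iff.1 (smul_stdSub_eq_iff.1 hstd (i.val + 1) (Nat.le_add_left 1 i) i.isLt) j hij
  have hpair := apply_apply_of_mem_isometryGroup hg
    (stdVec n (k.val + 1)) (stdVec n (k.rev.val + 1))
  rw [betaForm_stdVec_right, stdVec_apply, if_pos rfl, betaForm_apply,
    Finset.sum_eq_single k (fun j _ hjk => ?_) (by simp)] at hpair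
  · exact hpair
  · obtain hjk | hkj := lt_or_gt_of_ne hjk
    · rw [hcoord (Fin.rev_lt_rev.2 hjk), mul_zero]
    · rw [hcoord hkj, zero_mul]

-- The diagonal entries at `k` and `n - 1 - k` are inverse to each other, and these two positions
-- are distinct because `n` is even.
theorem det_eq_one_of_smul_stdSub_eq (hn : Even n) {g : (Fin n → ℂ) ≃ₗ[ℂ] (Fin n → ℂ)}
    (hg : g ∈ isometryGroup (betaForm n)) (hstd : g • stdSub n = stdSub n) :
    LinearMap.det g.toLinearMap = 1 := by
  have hentry (i j : Fin n) :
      LinearMap.toMatrix' g.toLinearMap i j = g (stdVec n (j.val + 1)) i := by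
    rw [LinearMap.toMatrix'_apply, stdVec_val_add_one, LinearEquiv.coe_coe]
  have htriangular : (LinearMap.toMatrix' g.toLinearMap).IsUpperTriangular := fun i j hji => by
    rw [hentry]
    exact mem_stdSub_iff.1 (smul_stdSub_eq_iff.1 hstd (j.val + 1) (by omega) j.isLt) i hji
  rw [← LinearMap.det_toMatrix', Matrix.det_of_isUpperTriangular htriangular]
  refine Finset.prod_involution (fun k _ => k.rev) (fun k _ => ?_) (fun k _ _ hk => ?_)
    (by simp) (by simp)
  · rw [hentry, hentry, apply_self_mul_apply_rev_eq_one hg hstd]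
  · obtain ⟨r, rfl⟩ := hn
    have := congrArg Fin.val hk
    rw [Fin.val_rev] at this
    omega

end StandardFlag

section Middle

variable {l m : ℕ} {g : (Fin (2 * l) → ℂ) ≃ₗ[ℂ] (Fin (2 * l) → ℂ)}

theorem smul_stdSub_eq_of_forall_le (hg : g ∈ isometryGroup (betaForm (2 * l)))
    (h : ∀ m ≤ l, g • stdSub (2 * l) m = stdSub (2 * l) m) :
    g • stdSub (2 * l) = stdSub (2 * l) := by
  refine funext fun m => ?_
  rw [Pi.smul_apply]
  by_cases hml : m ≤ l
  · exact h m hml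
  · by_cases hm : m ≤ 2 * l
    · rw [← Nat.sub_sub_self hm, ← orthogonal_stdSub, smul_orthogonal_of_mem_isometryGroup hg,
        h _ (by omega)]
    · rw [stdSub_eq_top (by omega)]
      exact map_top g.toLinearMap |>.trans g.range

/-- The vector `e_l - e_{-l}` fixed by `K`. -/
def diffVec (l : ℕ) : Fin (2 * l) → ℂ :=
  stdVec (2 * l) l - stdVec (2 * l) (l + 1)

/-- The vector `e_l + e_{-l}`, which together with `diffVec l` spans the same hyperbolic plane as
`e_l` and `e_{-l}`. -/
def sumVec (l : ℕ) : Fin (2 * l) → ℂ :=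
  stdVec (2 * l) l + stdVec (2 * l) (l + 1)

theorem middle_right_mem_orthogonal (hm : m < l) :
    stdVec (2 * l) (l + 1) ∈ (betaForm (2 * l)).orthogonal (stdSub (2 * l) m) := by
  rw [orthogonal_stdSub]
  exact stdVec_mem_stdSub (Nat.le_add_left 1 l) (by omega)

variable [NeZero l]

@[simp]
theorem betaForm_middle_left_left :
    betaForm (2 * l) (stdVec (2 * l) l) (stdVec (2 * l) l) = 0 := by
  have := NeZero.pos l
  rw [betaForm_stdVec_stdVec (by omega) (by omega), if_neg (by omega)]

@[simp]
theorem betaForm_middle_left_right :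
    betaForm (2 * l) (stdVec (2 * l) l) (stdVec (2 * l) (l + 1)) = 1 := by
  have := NeZero.pos l
  rw [betaForm_stdVec_stdVec (by omega) (by omega), if_pos (by omega)]

@[simp]
theorem betaForm_middle_right_left :
    betaForm (2 * l) (stdVec (2 * l) (l + 1)) (stdVec (2 * l) l) = 1 := by
  rw [← (betaForm_isSymm _).eq, betaForm_middle_left_right]

@[simp]
theorem betaForm_middle_right_right :
    betaForm (2 * l) (stdVec (2 * l) (l + 1)) (stdVec (2 * l) (l + 1)) = 0 := by
  have := NeZero.pos l
  rw [betaForm_stdVec_stdVec (by omega) (by omega), if_neg (by omega)]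

theorem betaForm_diffVec_diffVec : betaForm (2 * l) (diffVec l) (diffVec l) = -2 := by
  simp only [diffVec, map_sub, LinearMap.sub_apply, betaForm_middle_left_left,
    betaForm_middle_left_right, betaForm_middle_right_left, betaForm_middle_right_right]
  norm_num

theorem betaForm_sumVec_sumVec : betaForm (2 * l) (sumVec l) (sumVec l) = 2 := by
  simp only [sumVec, map_add, LinearMap.add_apply, betaForm_middle_left_left,
    betaForm_middle_left_right, betaForm_middle_right_left, betaForm_middle_right_right]
  norm_num

theorem betaForm_diffVec_sumVec : betaForm (2 * l) (diffVec l) (sumVec l) = 0 := by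
  simp [sumVec, diffVec]

theorem middle_left_mem_orthogonal (hm : m < l) :
    stdVec (2 * l) l ∈ (betaForm (2 * l)).orthogonal (stdSub (2 * l) m) := by
  rw [orthogonal_stdSub]
  exact stdVec_mem_stdSub (NeZero.pos l) (by omega)

theorem diffVec_mem_orthogonal (hm : m < l) :
    diffVec l ∈ (betaForm (2 * l)).orthogonal (stdSub (2 * l) m) :=
  sub_mem (middle_left_mem_orthogonal hm) (middle_right_mem_orthogonal hm)

theorem sumVec_mem_orthogonal (hm : m < l) :
    sumVec l ∈ (betaForm (2 * l)).orthogonal (stdSub (2 * l) m) :=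
  add_mem (middle_left_mem_orthogonal hm) (middle_right_mem_orthogonal hm)

theorem orthogonal_stdSub_pred : (betaForm (2 * l)).orthogonal (stdSub (2 * l) (l - 1)) =
    stdSub (2 * l) (l - 1) ⊔ span ℂ {stdVec (2 * l) l, stdVec (2 * l) (l + 1)} := by
  have := NeZero.pos l
  rw [orthogonal_stdSub, show 2 * l - (l - 1) = l - 1 + 1 + 1 by omega, stdSub_succ, stdSub_succ,
    Nat.sub_add_cancel this, sup_assoc, span_insert]

theorem exists_sub_smul_sumVec_mem {x : Fin (2 * l) → ℂ}
    (hx : x ∈ (betaForm (2 * l)).orthogonal (stdSub (2 * l) (l - 1)))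
    (hfx : betaForm (2 * l) (diffVec l) x = 0) :
    ∃ c : ℂ, x - c • sumVec l ∈ stdSub (2 * l) (l - 1) := by
  rw [orthogonal_stdSub_pred] at hx
  obtain ⟨w, hw, z, hz, rfl⟩ := mem_sup.1 hx
  obtain ⟨a, b, rfl⟩ := mem_span_pair.1 hz
  have hfw : betaForm (2 * l) (diffVec l) w = 0 :=
    ((betaForm_isSymm _).eq _ _).trans
      (diffVec_mem_orthogonal (Nat.sub_lt (NeZero.pos l) one_pos) w hw)
  obtain rfl : a = b := by
    rw [map_add, hfw] at hfx
    simp only [diffVec, map_add, map_sub, map_smul, LinearMap.sub_apply,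
      betaForm_middle_left_left, betaForm_middle_left_right, betaForm_middle_right_left,
      betaForm_middle_right_right, smul_eq_mul] at hfx
    linear_combination -hfx
  refine ⟨a, ?_⟩
  rwa [← smul_add, sumVec, add_sub_cancel_right]

theorem sub_sumVec_mem_or_add_sumVec_mem (hg : g ∈ isometryGroup (betaForm (2 * l)))
    (hgf : g (diffVec l) = diffVec l)
    (hU : g • stdSub (2 * l) (l - 1) = stdSub (2 * l) (l - 1)) :
    g (sumVec l) - sumVec l ∈ stdSub (2 * l) (l - 1) ∨
      g (sumVec l) + sumVec l ∈ stdSub (2 * l) (l - 1) := by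
  have hpred : l - 1 < l := Nat.sub_lt (NeZero.pos l) one_pos
  have horth : g (sumVec l) ∈ (betaForm (2 * l)).orthogonal (stdSub (2 * l) (l - 1)) := by
    rw [← hU, ← smul_orthogonal_of_mem_isometryGroup hg]
    exact smul_mem_pointwise_smul _ _ _ (sumVec_mem_orthogonal hpred)
  obtain ⟨c, hc⟩ := exists_sub_smul_sumVec_mem horth <| by
    conv_lhs => rw [← hgf]
    rw [apply_apply_of_mem_isometryGroup hg, betaForm_diffVec_sumVec]
  have hc_sq : c * c = 1 := by
    have hww := stdSub_le_orthogonal (show 2 * (l - 1) ≤ 2 * l by omega) hc _ hc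
    have hwp := sumVec_mem_orthogonal hpred _ hc
    have hpw := ((betaForm_isSymm _).eq _ _).trans hwp
    have hnorm := apply_apply_of_mem_isometryGroup hg (sumVec l) (sumVec l)
    rw [← sub_add_cancel (g (sumVec l)) (c • sumVec l)] at hnorm
    simp only [map_add (betaForm _), map_add (betaForm (2 * l) _), map_smul,
      LinearMap.add_apply, LinearMap.smul_apply, smul_eq_mul, hww, hwp, hpw,
      betaForm_sumVec_sumVec] at hnorm
    linear_combination hnorm / 2
  obtain rfl | rfl := mul_self_eq_one_iff.1 hc_sq
  · exact .inl (by rwa [one_smul] at hc)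
  · exact .inr (by rwa [neg_one_smul, sub_neg_eq_add] at hc)

theorem smul_stdSub_self_eq_of_sub_sumVec_mem (hgf : g (diffVec l) = diffVec l)
    (hU : g • stdSub (2 * l) (l - 1) = stdSub (2 * l) (l - 1))
    (hp : g (sumVec l) - sumVec l ∈ stdSub (2 * l) (l - 1)) :
    g • stdSub (2 * l) l = stdSub (2 * l) l := by
  have hstd := stdSub_succ (2 * l) (l - 1)
  rw [Nat.sub_add_cancel (NeZero.pos l)] at hstd
  have he : stdVec (2 * l) l = (1 / 2 : ℂ) • (sumVec l + diffVec l) := by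
    rw [sumVec, diffVec]
    module
  have hge : g (stdVec (2 * l) l) =
      (1 / 2 : ℂ) • (g (sumVec l) - sumVec l) + stdVec (2 * l) l := by
    rw [he, map_smul, map_add, hgf]
    module
  have hmem : g (stdVec (2 * l) l) ∈ stdSub (2 * l) l := by
    rw [hge, hstd]
    exact add_mem (mem_sup_left (smul_mem _ _ hp)) (mem_sup_right (mem_span_singleton_self _))
  refine eq_of_le_of_finrank_eq ?_ (LinearEquiv.finrank_map_eq g _)
  conv_lhs => rw [hstd]
  rw [smul_sup', hU, smul_span, Set.smul_set_singleton, sup_le_iff, span_singleton_le_iff_mem]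
  exact ⟨stdSub_mono _ (Nat.sub_le l 1), hmem⟩

theorem smul_stdSub_eq_of_sub_sumVec_mem (hg : g ∈ isometryGroup (betaForm (2 * l)))
    (hgf : g (diffVec l) = diffVec l) (hU : ∀ m < l, g • stdSub (2 * l) m = stdSub (2 * l) m)
    (hp : g (sumVec l) - sumVec l ∈ stdSub (2 * l) (l - 1)) :
    g • stdSub (2 * l) = stdSub (2 * l) := by
  refine smul_stdSub_eq_of_forall_le hg fun m hm => ?_
  obtain hm | rfl := hm.lt_or_eq
  · exact hU m hm
  · exact smul_stdSub_self_eq_of_sub_sumVec_mem hgf (hU _ (Nat.sub_lt (NeZero.pos _) one_pos)) hp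

/- Were `g (sumVec l) ≡ -sumVec l` modulo `U_{l-1}`, composing `g` with the reflection in `sumVec l`
would give an upper triangular isometry of determinant `-1`. -/
theorem smul_stdSub_eq_of_mem_specialStabilizer
    (hg : g ∈ specialStabilizer (betaForm (2 * l)) (diffVec l))
    (hU : ∀ m < l, g • stdSub (2 * l) m = stdSub (2 * l) m) :
    g • stdSub (2 * l) = stdSub (2 * l) := by
  obtain ⟨⟨hg, hdet⟩, hgf⟩ := mem_specialStabilizer_iff.1 hg
  obtain hp | hp := sub_sumVec_mem_or_add_sumVec_mem hg hgf
    (hU _ (Nat.sub_lt (NeZero.pos l) one_pos))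
  · exact smul_stdSub_eq_of_sub_sumVec_mem hg hgf hU hp
  · have hpp : betaForm (2 * l) (sumVec l) (sumVec l) ≠ 0 := by
      rw [betaForm_sumVec_sumVec]
      exact two_ne_zero
    let s := orthoReflection (betaForm (2 * l)) hpp
    have hs : s ∈ isometryGroup (betaForm (2 * l)) :=
      orthoReflection_mem_isometryGroup hpp (betaForm_isSymm _)
    have hsf : s (diffVec l) = diffVec l := orthoReflection_apply_of_eq_zero hpp
      (((betaForm_isSymm _).eq _ _).trans betaForm_diffVec_sumVec)
    have hsU (m : ℕ) (hm : m < l) : s • stdSub (2 * l) m = stdSub (2 * l) m :=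
      smul_submodule_eq_self_of_forall_mem_eq fun x hx => orthoReflection_apply_of_eq_zero hpp
        (((betaForm_isSymm _).eq _ _).trans (sumVec_mem_orthogonal hm x hx))
    have hgs : (g * s) • stdSub (2 * l) = stdSub (2 * l) := by
      refine smul_stdSub_eq_of_sub_sumVec_mem (mul_mem hg hs) ((congrArg g hsf).trans hgf)
        (fun m hm => by rw [mul_smul, hsU m hm, hU m hm]) ?_
      rw [LinearEquiv.mul_apply, orthoReflection_apply_self, map_neg, ← neg_add', neg_mem_iff]
      exact hp
    have hdet_gs := det_eq_one_of_smul_stdSub_eq (even_two_mul l) (mul_mem hg hs) hgs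
    have hdet_mul := (LinearMap.det_comp g.toLinearMap s.toLinearMap).symm.trans hdet_gs
    rw [hdet, det_orthoReflection, one_mul] at hdet_mul
    norm_num at hdet_mul

end Middle

section Stabilizers

variable {l : ℕ} {g : (Fin (2 * l) → ℂ) ≃ₗ[ℂ] (Fin (2 * l) → ℂ)}

theorem Keven_eq (l : ℕ) :
    Keven l = specialStabilizer (betaForm (2 * l)) (diffVec l) := by
  ext g
  rw [SetLike.mem_coe, mem_specialStabilizer_iff, and_comm (a := g ∈ isometryGroup _)]
  rfl

theorem orbitOf_coe (n : ℕ) (H : Subgroup ((Fin n → ℂ) ≃ₗ[ℂ] (Fin n → ℂ)))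
    (F : ℕ → Submodule ℂ (Fin n → ℂ)) : orbitOf n H F = MulAction.orbit H F :=
  Set.ext fun _ => ⟨fun ⟨b, hb, h⟩ => ⟨⟨b, hb⟩, h⟩, fun ⟨b, h⟩ => ⟨b, b.2, h⟩⟩

theorem smul_EEvenFlag_eq_iff [NeZero l] :
    g • EEvenFlag l = EEvenFlag l ↔ ∀ m < l, g • stdSub (2 * l) m = stdSub (2 * l) m := by
  have hE (m : ℕ) : EEvenFlag l m = stdSub (2 * l) (min m (l - 1)) := rfl
  simp only [funext_iff, Pi.smul_apply, hE]
  refine ⟨fun h m hm => ?_, fun h m => h _ ?_⟩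
  · simpa [Nat.le_sub_one_of_lt hm] using h m
  · have := NeZero.pos l
    omega

theorem BEvenBorel_eq (l : ℕ) [NeZero l] : BEvenBorel l =
    ↑(specialStabilizer (betaForm (2 * l)) (diffVec l) ⊓
      MulAction.stabilizer _ (EEvenFlag l)) := by
  ext g
  rw [BEvenBorel, Keven_eq, Subgroup.coe_inf]
  refine and_congr_right fun hg => smul_stdSub_eq_iff.symm.trans ?_
  refine Iff.trans ?_ smul_EEvenFlag_eq_iff.symm
  exact ⟨fun h m _ => congrFun h m, smul_stdSub_eq_of_mem_specialStabilizer hg⟩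

theorem FyEvenFlag_succ {m : ℕ} (hm : m < l) :
    FyEvenFlag l (m + 1) = span ℂ {stdVec (2 * l) l} ⊔ stdSub (2 * l) m := by
  have hvec : Set.EqOn (FyEvenVec l ∘ Nat.succ) (stdVec (2 * l)) (Set.Icc 1 m) := fun j hj => by
    simp [FyEvenVec, Nat.one_le_iff_ne_zero.1 hj.1]
  have hIcc : Set.Icc 1 (m + 1) = insert 1 (Nat.succ '' Set.Icc 1 m) := by
    ext (_ | j) <;> grind
  rw [FyEvenFlag, isoFlagOf, min_eq_left hm, hIcc, Set.image_insert_eq, ← Set.image_comp,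
    hvec.image_eq, span_insert, stdSub, FyEvenVec, if_pos rfl]

theorem smul_FyEvenFlag_eq_iff :
    g • FyEvenFlag l = FyEvenFlag l ↔ ∀ m < l, g • (span ℂ {stdVec (2 * l) l} ⊔ stdSub (2 * l) m) =
      span ℂ {stdVec (2 * l) l} ⊔ stdSub (2 * l) m := by
  refine ⟨fun h m hm => ?_, fun h => funext fun k => ?_⟩
  · rw [← FyEvenFlag_succ hm]
    exact congrFun h (m + 1)
  · have hmin : FyEvenFlag l k = FyEvenFlag l (min k l) := by
      simp [FyEvenFlag, isoFlagOf]
    rw [Pi.smul_apply, hmin]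
    cases hk : min k l with
    | zero => simp [FyEvenFlag, isoFlagOf]
    | succ m =>
      rw [FyEvenFlag_succ (by omega)]
      exact h m (by omega)

theorem apply_middle_eq_of_apply_mem_span [NeZero l] (hg : g ∈ isometryGroup (betaForm (2 * l)))
    (hgf : g (diffVec l) = diffVec l)
    (h : g (stdVec (2 * l) l) ∈ span ℂ {stdVec (2 * l) l}) :
    g (stdVec (2 * l) l) = stdVec (2 * l) l ∧
      g (stdVec (2 * l) (l + 1)) = stdVec (2 * l) (l + 1) := by
  obtain ⟨c, hc⟩ := mem_span_singleton.1 h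
  have hright : g (stdVec (2 * l) (l + 1)) =
      (c - 1) • stdVec (2 * l) l + stdVec (2 * l) (l + 1) := by
    rw [diffVec, map_sub, ← hc] at hgf
    rw [sub_smul, one_smul, sub_add, ← hgf, sub_sub_cancel]
  have hisotropic := apply_apply_of_mem_isometryGroup hg
    (stdVec (2 * l) (l + 1)) (stdVec (2 * l) (l + 1))
  obtain rfl : c = 1 := by
    rw [hright] at hisotropic
    simp only [map_add, map_smul, LinearMap.add_apply, LinearMap.smul_apply, smul_eq_mul,
      betaForm_middle_left_left, betaForm_middle_left_right, betaForm_middle_right_left,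
      betaForm_middle_right_right] at hisotropic
    linear_combination hisotropic / 2
  exact ⟨by rw [← hc, one_smul], by rw [hright, sub_self, zero_smul, zero_add]⟩

theorem smul_stdSub_eq_of_smul_sup_eq [NeZero l] (hg : g ∈ isometryGroup (betaForm (2 * l)))
    (hright : g (stdVec (2 * l) (l + 1)) = stdVec (2 * l) (l + 1)) {m : ℕ} (hm : m < l)
    (h : g • (span ℂ {stdVec (2 * l) l} ⊔ stdSub (2 * l) m) =
      span ℂ {stdVec (2 * l) l} ⊔ stdSub (2 * l) m) :
    g • stdSub (2 * l) m = stdSub (2 * l) m := by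
  refine smul_submodule_eq_self_of_forall_mem fun x hx => ?_
  have horth {w : Fin (2 * l) → ℂ} (hw : w ∈ stdSub (2 * l) m) :
      betaForm (2 * l) (stdVec (2 * l) (l + 1)) w = 0 :=
    ((betaForm_isSymm _).eq _ _).trans (middle_right_mem_orthogonal hm w hw)
  have hgx := smul_mem_pointwise_smul x g _ (mem_sup_right hx : x ∈ span ℂ {stdVec (2 * l) l} ⊔ _)
  rw [h, LinearEquiv.smul_def] at hgx
  obtain ⟨v, hv, w, hw, hvw⟩ := mem_sup.1 hgx
  obtain ⟨a, rfl⟩ := mem_span_singleton.1 hv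
  have ha : a = 0 := by
    have hpair := apply_apply_of_mem_isometryGroup hg (stdVec (2 * l) (l + 1)) x
    rw [hright, ← hvw, map_add, horth hw, horth hx] at hpair
    simpa using hpair
  rwa [← hvw, ha, zero_smul, zero_add]

theorem BEvenSmall_eq (l : ℕ) [NeZero l] : BEvenSmall l =
    ↑(specialStabilizer (betaForm (2 * l)) (diffVec l) ⊓
      MulAction.stabilizer _ (FyEvenFlag l)) := by
  ext g
  rw [Subgroup.coe_inf, ← Keven_eq]
  constructor
  · rintro ⟨hSO, hleft, hright, hupper⟩
    have hstd := smul_stdSub_eq_iff.2 hupper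
    refine ⟨⟨hSO, by rw [map_sub, hleft, hright]⟩, smul_FyEvenFlag_eq_iff.2 fun m _ => ?_⟩
    rw [smul_sup', smul_span, Set.smul_set_singleton, LinearEquiv.smul_def, hleft]
    exact congrArg _ (congrFun hstd m)
  · rintro ⟨hK, hF⟩
    have hF' := smul_FyEvenFlag_eq_iff.1 hF
    have hspan : g • span ℂ {stdVec (2 * l) l} = span ℂ {stdVec (2 * l) l} := by
      simpa [stdSub] using hF' 0 (NeZero.pos l)
    have hg : g ∈ isometryGroup (betaForm (2 * l)) := hK.1.2
    obtain ⟨hleft, hright⟩ := apply_middle_eq_of_apply_mem_span hg hK.2 <| by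
      rw [← hspan]
      exact smul_mem_pointwise_smul _ _ _ (mem_span_singleton_self _)
    refine ⟨hK.1, hleft, hright, smul_stdSub_eq_iff.1 ?_⟩
    rw [Keven_eq] at hK
    exact smul_stdSub_eq_of_mem_specialStabilizer hK fun m hm =>
      smul_stdSub_eq_of_smul_sup_eq hg hright hm (hF' m hm)

theorem isIsotropicFlag_EEvenFlag (l : ℕ) [NeZero l] :
    IsIsotropicFlag (betaForm (2 * l)) (span ℂ {diffVec l}) (l - 1) (EEvenFlag l) := by
  have hE (m : ℕ) : EEvenFlag l m = stdSub (2 * l) (min m (l - 1)) := rfl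
  refine ⟨fun i hi => ?_, fun i _ => ?_, ?_, ?_⟩
  · rw [hE, min_eq_left hi, finrank_stdSub (by omega)]
  · rw [hE, hE]
    exact stdSub_mono _ (by omega)
  · rw [hE, min_self]
    exact stdSub_le_orthogonal (by omega)
  · rw [hE, min_self, LinearMap.BilinForm.orthogonal_span_singleton_eq_toLin_ker]
    exact fun x hx => ((betaForm_isSymm _).eq _ _).trans
      (diffVec_mem_orthogonal (Nat.sub_lt (NeZero.pos l) one_pos) x hx)

theorem isIsotropicFlag_of_inY {W : ℕ → Submodule ℂ (Fin (2 * l) → ℂ)} (hW : InY l W) :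
    IsIsotropicFlag (betaForm (2 * l)) (span ℂ {diffVec l}) (l - 1) W where
  finrank_eq := hW.1.1
  le_succ i _ := hW.1.2.1 i
  isotropic w hw u hu := hW.1.2.2.2 u hu w hw
  le_orthogonal := by
    rw [LinearMap.BilinForm.orthogonal_span_singleton_eq_toLin_ker]
    exact fun w hw => ((betaForm_isSymm _).eq _ _).trans (hW.2 w hw)

theorem exists_smul_EEvenFlag_eq_of_inY [NeZero l] {W : ℕ → Submodule ℂ (Fin (2 * l) → ℂ)}
    (hW : InY l W) :
    ∃ g ∈ specialStabilizer (betaForm (2 * l)) (diffVec l), g • EEvenFlag l = W := by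
  obtain ⟨g, hg, hgW⟩ := exists_mem_specialStabilizer_smul_flag_eq (betaForm_nondegenerate (2 * l))
    (betaForm_isSymm _) (by simp [betaForm_diffVec_diffVec]) (by simp)
    (isIsotropicFlag_EEvenFlag l) (isIsotropicFlag_of_inY hW)
  refine ⟨g, hg, funext fun k => ?_⟩
  obtain hk | hk := le_total k (l - 1)
  · exact hgW k hk
  · rw [hW.1.2.2.1 k hk, ← hgW _ le_rfl, Pi.smul_apply, EEvenFlag, isoFlagOf, isoFlagOf,
      min_eq_right hk, min_self]

end Stabilizers

/-- `B'·(k·F_y) = B'·(k'·F_y)` iff `B_{2l-2}·(k⁻¹·E) = B_{2l-2}·(k'⁻¹·E)`, and every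
`B_{2l-2}`-orbit on `Y` arises as some `B_{2l-2}·(k⁻¹·E)`; hence
`B'·(k·F_y) ↦ B_{2l-2}·(k⁻¹·E)` is a well-defined bijection from the `B'`-orbits on
`K·F_y` onto the `B_{2l-2}`-orbits on `Y`. -/
theorem stmt_11 (l : ℕ) (hl : 2 ≤ l) :
    (∀ a ∈ Keven l, ∀ a' ∈ Keven l,
      (orbitOf (2 * l) (BEvenBorel l) (actFlag (2 * l) a (FyEvenFlag l)) =
          orbitOf (2 * l) (BEvenBorel l) (actFlag (2 * l) a' (FyEvenFlag l)) ↔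
        orbitOf (2 * l) (BEvenSmall l) (actFlag (2 * l) a.symm (EEvenFlag l)) =
          orbitOf (2 * l) (BEvenSmall l) (actFlag (2 * l) a'.symm (EEvenFlag l)))) ∧
    (∀ W, InY l W →
      ∃ a ∈ Keven l,
        orbitOf (2 * l) (BEvenSmall l) (actFlag (2 * l) a.symm (EEvenFlag l)) =
          orbitOf (2 * l) (BEvenSmall l) W) := by
  have : NeZero l := ⟨by omega⟩
  rw [Keven_eq, BEvenBorel_eq, BEvenSmall_eq]
  simp only [orbitOf_coe]
  refine ⟨fun a ha a' ha' => orbit_inf_stabilizer_smul_eq_iff _ _ _ ha ha', fun W hW => ?_⟩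
  obtain ⟨g, hg, rfl⟩ := exists_smul_EEvenFlag_eq_of_inY hW
  exact ⟨g⁻¹, inv_mem hg, rfl⟩
end
end

section
/- Let 1 ≤ i ≤ n and let 1 ≤ k ≤ n-1 with k ≠ i-1 and k ≠ i. If F' is a complete flag in ℂ^n whose m-th subspace agrees with the m-th subspace of F_i for every m ≠ k, then F' lies in the K-orbit of F_i. (In the language of the paper: the simple root α_k is compact for the closed K-orbit Q_i = K·F_i.) -/
open Module Submodule

noncomputable section

/-- A complete flag in `ℂ^n`: `V k` is the `k`-dimensional member for `0 ≤ k ≤ n`;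
values above `n` are pinned so that two flags are equal iff they agree in degrees `≤ n`. -/
def IsCompleteFlag (n : ℕ) (V : ℕ → Submodule ℂ (Fin n → ℂ)) : Prop :=
  (∀ k, k ≤ n → finrank ℂ ↥(V k) = k) ∧ (∀ k, V k ≤ V (k + 1)) ∧ (∀ k, n ≤ k → V k = V n)

/-- The complete flag `(v 1 ⊂ v 2 ⊂ ⋯ ⊂ v n)` spanned by the vectors `v 1, …, v n`. -/
def flagOf (n : ℕ) (v : ℕ → Fin n → ℂ) (k : ℕ) : Submodule ℂ (Fin n → ℂ) :=
  span ℂ (v '' Set.Icc 1 (min k n))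

/-- `K = {g ∈ GL(n,ℂ) : g e_n = e_n, g U_{n-1} = U_{n-1}}`, a copy of `GL(n-1,ℂ)`. -/
def Ksub (n : ℕ) : Set ((Fin n → ℂ) ≃ₗ[ℂ] (Fin n → ℂ)) :=
  {g | g (stdVec n n) = stdVec n n ∧
       Submodule.map g.toLinearMap (stdSub n (n - 1)) = stdSub n (n - 1)}

/-- `V'` lies in the `K`-orbit of `V`. -/
def InKOrbit (n : ℕ) (V V' : ℕ → Submodule ℂ (Fin n → ℂ)) : Prop :=
  ∃ g ∈ Ksub n, actFlag n g V = V'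

/-- Vectors of the representative flags: for `i = j` this gives the flag `F_i`
`(e_1 ⊂ ⋯ ⊂ e_{i-1} ⊂ e_n ⊂ e_i ⊂ ⋯ ⊂ e_{n-1})` (`e_n` in position `i`), and for
`i < j` the flag `F_{i,j}`
`(e_1 ⊂ ⋯ ⊂ e_{i-1} ⊂ e_i + e_n ⊂ e_{i+1} ⊂ ⋯ ⊂ e_{j-1} ⊂ e_n ⊂ e_j ⊂ ⋯ ⊂ e_{n-1})`. -/
def repVec (n i j m : ℕ) : Fin n → ℂ :=
  if m < i then stdVec n m
  else if m = i then (if i < j then stdVec n i else 0) + stdVec n n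
  else if m < j then stdVec n m
  else if m = j then stdVec n n
  else stdVec n (m - 1)

/-- `repFlag n i i = F_i` and `repFlag n i j = F_{i,j}` for `i < j`. -/
def repFlag (n i j : ℕ) : ℕ → Submodule ℂ (Fin n → ℂ) := flagOf n (repVec n i j)

/-!
Write `w_1, …, w_n` for the basis defining `F_i`. Both `F_i` and the given flag `V` have their
`k`-th subspace between `F_{k-1}` and `F_{k+1} = F_{k-1} ⊕ T`, where `T = span(w_k, w_{k+1})`.
Let `C` be the span of the other `w_l`, so that `ℂ^n = T ⊕ C`. An automorphism of `T` carrying the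
line `F_k ∩ T` to the line `V_k ∩ T`, extended by the identity on `C`, carries `F_k` to `V_k`. It
preserves every subspace that is contained in `C` or contains `T`, hence all the other `F_m`. As
`k ∉ {i-1, i}`, the vector `e_n = w_i` lies in `C` and `T ⊆ U_{n-1}`, so the extension is in `K`.
-/

theorem sup_inf_eq_of_le_of_le_sup {α : Type*} [Lattice α] [IsModularLattice α] {a s t : α}
    (has : a ≤ s) (hs : s ≤ a ⊔ t) : a ⊔ t ⊓ s = s := by
  rw [← sup_inf_assoc_of_le t has, inf_eq_right.mpr hs]

section LinearAlgebra

variable {K E : Type*} [DivisionRing K] [AddCommGroup E] [Module K E]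
  {T C A S S' : Submodule K E}

theorem exists_linearEquiv_map_eq_of_finrank_eq [FiniteDimensional K E]
    (h : finrank K S = finrank K S') : ∃ g : E ≃ₗ[K] E, S.map g.toLinearMap = S' := by
  let f : S ≃ₗ[K] S' := LinearEquiv.ofFinrankEq S S' h
  obtain ⟨g, hfg⟩ := exists_linearEquiv_restrict_eq f
  refine ⟨g, eq_of_le_of_finrank_eq ?_ ((g.finrank_map_eq S).trans h)⟩
  rintro _ ⟨x, hx, rfl⟩
  exact hfg ⟨x, hx⟩ ▸ (f ⟨x, hx⟩).2

theorem exists_linearEquiv_extend_of_isCompl (hTC : IsCompl T C) (h : T ≃ₗ[K] T) :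
    ∃ g : E ≃ₗ[K] E, (∀ x : T, g x = h x) ∧ ∀ x ∈ C, g x = x := by
  let e := T.prodEquivOfIsCompl C hTC
  refine ⟨e.symm ≪≫ₗ h.prodCongr (.refl K C) ≪≫ₗ e, fun x ↦ ?_, fun x hx ↦ ?_⟩
  · simp [e]
  · lift x to C using hx
    simp [e]

theorem map_eq_self_of_forall_mem {g : E ≃ₗ[K] E} (hg : ∀ x ∈ S, g x = x) :
    S.map g.toLinearMap = S :=
  SetLike.coe_injective <| (Set.EqOn.image_eq hg).trans (Set.image_id _)

theorem map_eq_self_of_codisjoint {g : E ≃ₗ[K] E} (hTC : Codisjoint T C)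
    (hC : ∀ x ∈ C, g x = x) (hT : T.map g.toLinearMap = T) (hTS : T ≤ S) :
    S.map g.toLinearMap = S := by
  have hCS : (C ⊓ S).map g.toLinearMap = C ⊓ S :=
    map_eq_self_of_forall_mem fun x hx ↦ hC x hx.1
  rw [← sup_inf_eq_of_le_of_le_sup hTS (hTC.eq_top ▸ le_top), Submodule.map_sup, hT, hCS]

theorem finrank_eq_add_finrank_inf_of_le_sup [FiniteDimensional K E] (hAT : Disjoint A T)
    (hAS : A ≤ S) (hS : S ≤ A ⊔ T) : finrank K S = finrank K A + finrank K ↥(T ⊓ S) := by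
  rw [← finrank_sup_add_finrank_inf_eq, (hAT.mono_right inf_le_left).eq_bot, finrank_bot,
    add_zero, sup_inf_eq_of_le_of_le_sup hAS hS]

theorem exists_linearEquiv_map_eq_of_le_sup [FiniteDimensional K E] (hTC : IsCompl T C)
    (hAC : A ≤ C) (hAS : A ≤ S) (hS : S ≤ A ⊔ T) (hAS' : A ≤ S') (hS' : S' ≤ A ⊔ T)
    (hdim : finrank K S = finrank K S') :
    ∃ g : E ≃ₗ[K] E, (∀ x ∈ C, g x = x) ∧ T.map g.toLinearMap = T ∧ S.map g.toLinearMap = S' := by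
  have hAT : Disjoint A T := (hTC.disjoint.mono_right hAC).symm
  have hdim_inf : finrank K ↥(S.comap T.subtype) = finrank K ↥(S'.comap T.subtype) := by
    rw [← finrank_map_subtype_eq T (S.comap _), ← finrank_map_subtype_eq T (S'.comap _),
      map_comap_subtype, map_comap_subtype]
    have := finrank_eq_add_finrank_inf_of_le_sup hAT hAS hS
    have := finrank_eq_add_finrank_inf_of_le_sup hAT hAS' hS'
    lia
  obtain ⟨h, h_map⟩ := exists_linearEquiv_map_eq_of_finrank_eq hdim_inf
  obtain ⟨g, hgT, hgC⟩ := exists_linearEquiv_extend_of_isCompl hTC h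
  have hg_map (X : Submodule K T) :
      (X.map T.subtype).map g.toLinearMap = (X.map h.toLinearMap).map T.subtype := by
    rw [← map_comp, ← map_comp]
    exact congrArg X.map (LinearMap.ext hgT)
  refine ⟨g, hgC, ?_, ?_⟩
  · simpa using hg_map ⊤
  · have hg_inf : (T ⊓ S).map g.toLinearMap = T ⊓ S' := by
      rw [← map_comap_subtype, hg_map, h_map, map_comap_subtype]
    calc S.map g.toLinearMap
        = (A ⊔ T ⊓ S).map g.toLinearMap := by rw [sup_inf_eq_of_le_of_le_sup hAS hS]
      _ = A ⊔ T ⊓ S' := by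
          rw [Submodule.map_sup, hg_inf, map_eq_self_of_forall_mem fun x hx ↦ hgC x (hAC hx)]
      _ = S' := sup_inf_eq_of_le_of_le_sup hAS' hS'

theorem linearIndepOn_iff_finrank_span_image_eq_ncard {ι : Type*} {v : ι → E} {s : Set ι}
    (hs : s.Finite) : LinearIndepOn K v s ↔ finrank K (span K (v '' s)) = s.ncard := by
  have := hs.fintype
  rw [LinearIndepOn, linearIndependent_iff_card_eq_finrank_span, Set.finrank, eq_comm,
    ← Set.image_eq_range, Set.ncard_eq_toFinset_card', Set.toFinset_card]

end LinearAlgebra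

section Flags

variable {n k : ℕ} {v : ℕ → Fin n → ℂ} {V : ℕ → Submodule ℂ (Fin n → ℂ)}

theorem IsCompleteFlag.monotone (hV : IsCompleteFlag n V) : Monotone V :=
  monotone_nat_of_le_succ hV.2.1

theorem flagOf_of_le (hk : k ≤ n) : flagOf n v k = span ℂ (v '' Set.Icc 1 k) := by
  rw [flagOf, min_eq_left hk]

theorem flagOf_monotone : Monotone (flagOf n v) := fun _ _ h ↦
  span_mono <| Set.image_mono <| Set.Icc_subset_Icc_right <| min_le_min_right n h

theorem linearIndepOn_iff_finrank_flagOf (hk : k ≤ n) :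
    LinearIndepOn ℂ v (Set.Icc 1 k) ↔ finrank ℂ (flagOf n v k) = k := by
  rw [linearIndepOn_iff_finrank_span_image_eq_ncard (Set.finite_Icc 1 k), flagOf_of_le hk,
    Set.ncard_Icc_nat, Nat.add_sub_cancel]

theorem isCompl_span_image_of_linearIndepOn (hv : LinearIndepOn ℂ v (Set.Icc 1 n)) {s : Set ℕ}
    (hs : s ⊆ Set.Icc 1 n) :
    IsCompl (span ℂ (v '' s)) (span ℂ (v '' (Set.Icc 1 n \ s))) := by
  have hspan : flagOf n v n = ⊤ :=
    eq_top_of_finrank_eq <| by simpa using (linearIndepOn_iff_finrank_flagOf le_rfl).mp hv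
  rw [← Set.union_sdiff_cancel hs] at hv
  refine ⟨((linearIndepOn_union_iff Set.disjoint_sdiff_right).mp hv).2.2, codisjoint_iff.mpr ?_⟩
  rw [← span_union, ← Set.image_union, Set.union_sdiff_cancel hs, ← hspan, flagOf_of_le le_rfl]

theorem flagOf_sup_span_pair (hk1 : 1 ≤ k) (hkn : k < n) :
    flagOf n v (k - 1) ⊔ span ℂ (v '' {k, k + 1}) = flagOf n v (k + 1) := by
  rw [flagOf_of_le (by lia), flagOf_of_le (by lia), ← span_union, ← Set.image_union]
  congr 2
  ext l
  simp only [Set.mem_union, Set.mem_Icc, Set.mem_insert_iff, Set.mem_singleton_iff]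
  lia

theorem exists_actFlag_flagOf_eq (hk1 : 1 ≤ k) (hkn : k < n) (hV : IsCompleteFlag n V)
    (hagree : ∀ m, m ≠ k → V m = flagOf n v m) :
    ∃ g : (Fin n → ℂ) ≃ₗ[ℂ] (Fin n → ℂ),
      (∀ l ∈ Set.Icc 1 n \ {k, k + 1}, g (v l) = v l) ∧
      (∀ S : Submodule ℂ (Fin n → ℂ), v k ∈ S → v (k + 1) ∈ S → S.map g.toLinearMap = S) ∧
      actFlag n g (flagOf n v) = V := by
  have hv : LinearIndepOn ℂ v (Set.Icc 1 n) :=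
    (linearIndepOn_iff_finrank_flagOf le_rfl).mpr (hagree n hkn.ne' ▸ hV.1 n le_rfl)
  have hdim : finrank ℂ (flagOf n v k) = finrank ℂ (V k) :=
    ((linearIndepOn_iff_finrank_flagOf hkn.le).mp
      (hv.mono (Set.Icc_subset_Icc_right hkn.le))).trans (hV.1 k hkn.le).symm
  have hTC := isCompl_span_image_of_linearIndepOn hv (s := {k, k + 1}) (by grind)
  have hsup := flagOf_sup_span_pair (v := v) hk1 hkn
  have hlow : flagOf n v (k - 1) ≤ span ℂ (v '' (Set.Icc 1 n \ {k, k + 1})) := by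
    rw [flagOf_of_le (by lia)]
    exact span_mono (Set.image_mono (by grind))
  obtain ⟨g, hgC, hgT, hgk⟩ := exists_linearEquiv_map_eq_of_le_sup hTC hlow
    (flagOf_monotone (Nat.sub_le k 1)) (hsup ▸ flagOf_monotone k.le_succ)
    (hagree (k - 1) (by lia) ▸ hV.monotone (Nat.sub_le k 1))
    (hsup ▸ hagree (k + 1) (by lia) ▸ hV.monotone k.le_succ) hdim
  refine ⟨g, fun l hl ↦ hgC _ (subset_span ⟨l, hl, rfl⟩), fun S hk hk' ↦ ?_, funext fun m ↦ ?_⟩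
  · refine map_eq_self_of_codisjoint hTC.codisjoint hgC hgT (span_le.mpr ?_)
    simp [Set.insert_subset_iff, Set.image_pair, hk, hk']
  · rcases lt_trichotomy m k with hm | rfl | hm
    · rw [hagree m hm.ne]
      exact map_eq_self_of_forall_mem fun x hx ↦ hgC x (hlow (flagOf_monotone (by lia) hx))
    · exact hgk
    · rw [hagree m hm.ne']
      exact map_eq_self_of_codisjoint hTC.codisjoint hgC hgT
        ((le_sup_right.trans_eq hsup).trans (flagOf_monotone hm))

theorem stdVec_mem_stdSub_s13 {m : ℕ} (hm1 : 1 ≤ m) (hmk : m ≤ k) : stdVec n m ∈ stdSub n k :=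
  subset_span ⟨m, ⟨hm1, hmk⟩, rfl⟩

theorem repVec_self_self (n i : ℕ) : repVec n i i i = stdVec n n := by
  simp [repVec]

theorem repVec_self_mem_stdSub {i l : ℕ} (hi1 : 1 ≤ i) (hin : i ≤ n) (hl1 : 1 ≤ l) (hln : l ≤ n)
    (hli : l ≠ i) : repVec n i i l ∈ stdSub n (n - 1) := by
  rcases hli.lt_or_gt with h | h
  · simpa [repVec, h] using stdVec_mem_stdSub_s13 hl1 (by lia)
  · simpa [repVec, h.not_gt, hli] using stdVec_mem_stdSub_s13 (by lia) (by lia)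

end Flags

/-- If a complete flag agrees with `F_i` in every degree `m ≠ k`, where `1 ≤ k ≤ n-1`
and `k ∉ {i-1, i}`, then it lies in the `K`-orbit of `F_i`
(the simple root `α_k` is compact for the closed orbit `Q_i = K·F_i`). -/
theorem stmt_13 (n : ℕ) (hn : 2 ≤ n) (i k : ℕ) (hi1 : 1 ≤ i) (hin : i ≤ n)
    (hk1 : 1 ≤ k) (hkn : k ≤ n - 1) (hki : k ≠ i - 1) (hki' : k ≠ i)
    (V : ℕ → Submodule ℂ (Fin n → ℂ)) (hV : IsCompleteFlag n V)
    (hagree : ∀ m, m ≠ k → V m = repFlag n i i m) :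
    InKOrbit n (repFlag n i i) V := by
  obtain ⟨g, hg_fix, hg_map, hgV⟩ := exists_actFlag_flagOf_eq hk1 (by lia) hV hagree
  refine ⟨g, ⟨?_, ?_⟩, hgV⟩
  · rw [← repVec_self_self n i]
    exact hg_fix i (by grind)
  · exact hg_map _ (repVec_self_mem_stdSub hi1 hin hk1 (by lia) hki')
      (repVec_self_mem_stdSub hi1 hin (by lia) (by lia) (by lia))
end
end
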